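/- arXiv:2409.17215 — 7 statements merged into one kernel-verified Lean document; each statement's English description precedes it below -/
import Mathlib

section
/- (Dual unitarity.) Let A be a Hopf algebra over ℂ with antipode S satisfying S∘S = id, equipped with a *-structure (a conjugate-linear involution * with (x·y)* = y*·x*). Let (v_{ij}) be a d_v-dimensional corepresentation of A with S(v_{ij}) = (v_{ji})*, and let ρ be a d_ρ-dimensional representation of A with ρ(x*) = ρ(x)^† for all x ∈ A. Then the spatially-reshuffled matrix Ũ with entries Ũ_{(i,b),(a,j)} := ρ(v_{ij})_{ab} (rows indexed by pairs (i,b), columns by pairs (a,j)) is unitary; equivalently, Σ_{k=1}^{d_v} Σ_{c=1}^{d_ρ} ρ(v_{kj})_{ac} · conj(ρ(v_{ki})_{bc}) = δ_{ij}·δ_{ab} for all i,j,a,b. -/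
open scoped TensorProduct
open Matrix

/-- The spatially-reshuffled gate `Ũ` with entries `Ũ_{(i,b),(a,j)} = ρ(v_{ij})_{ab}`,
rows indexed by pairs `(i, b)` and columns by pairs `(a, j)`. -/
noncomputable def dualGateMatrix {A : Type*} [Ring A] [Algebra ℂ A] {dρ dv : ℕ}
    (ρ : A →ₐ[ℂ] Matrix (Fin dρ) (Fin dρ) ℂ) (v : Fin dv → Fin dv → A) :
    Matrix (Fin dv × Fin dρ) (Fin dρ × Fin dv) ℂ :=
  Matrix.of fun p q => ρ (v p.1 q.2) q.1 p.2

/-!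
The antipode axiom says that `S(v)` is a right inverse of the coefficient matrix `v`. Applying the
antimultiplicative map `S` to `v S(v) = 1` reverses the products of entries, which amounts to
transposing the factors; since `S` is involutive on the coefficients, this gives `vᵀ S(v)ᵀ = 1`.
Under a representation taking `S(v i j)` to the adjoint of `ρ (v j i)`, the matrix of blocks
`w = ρ(v)` therefore satisfies `wᵀ (wᵀ)ᴴ = 1`. Up to a transposition and a relabelling of the
indices, the left-hand side is `Ũᴴ Ũ`.
-/

/-- A finite-dimensional corepresentation of the coalgebra `A`, encoded by the matrix of its
coefficients in a basis. -/
structure IsCorepresentation (R : Type*) {A ι : Type*} [CommSemiring R] [AddCommMonoid A]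
    [Module R A] [Coalgebra R A] [Fintype ι] [DecidableEq ι] (v : Matrix ι ι A) : Prop where
  comul_apply (i j : ι) : Coalgebra.comul (R := R) (v i j) = ∑ k, v i k ⊗ₜ[R] v k j
  counit_apply (i j : ι) : Coalgebra.counit (R := R) (v i j) = if i = j then 1 else 0

section Antipode

open HopfAlgebra

variable {R A ι : Type*} [CommSemiring R] [Semiring A] [HopfAlgebra R A] [Fintype ι]

theorem transpose_map_antipode_mul {κ μ : Type*} (x : Matrix κ ι A) (y : Matrix ι μ A) :
    (y.map (antipode R))ᵀ * (x.map (antipode R))ᵀ = ((x * y).map (antipode R))ᵀ := by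
  ext i j
  simp [mul_apply, antipode_mul_antidistrib]

variable [DecidableEq ι] {v : Matrix ι ι A}

theorem IsCorepresentation.mul_map_antipode (hv : IsCorepresentation R v) :
    v * v.map (antipode R) = 1 := by
  ext i j
  simpa [hv.comul_apply, hv.counit_apply, mul_apply, one_apply, apply_ite] using
    mul_antipode_lTensor_comul_apply (R := R) (v i j)

theorem IsCorepresentation.transpose_mul_transpose_map_antipode (hv : IsCorepresentation R v)
    (hS : ∀ i j, antipode R (antipode R (v i j)) = v i j) :
    vᵀ * (v.map (antipode R))ᵀ = 1 := by
  have hSS : (v.map (antipode R)).map (antipode R) = v := Matrix.ext hS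
  have hS_one : (1 : Matrix ι ι A).map (antipode R) = 1 :=
    Matrix.map_one _ (map_zero _) antipode_one
  calc vᵀ * (v.map (antipode R))ᵀ
      = ((v * v.map (antipode R)).map (antipode R))ᵀ := by
        rw [← transpose_map_antipode_mul, hSS]
    _ = 1 := by rw [hv.mul_map_antipode, hS_one, transpose_one]

theorem IsCorepresentation.transpose_map_mul_conjTranspose_self {B : Type*} [Semiring B] [Star B]
    (hv : IsCorepresentation R v) (hS : ∀ i j, antipode R (antipode R (v i j)) = v i j)
    (ρ : A →+* B) (hρ : ∀ i j, ρ (antipode R (v i j)) = star (ρ (v j i))) :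
    (v.map ρ)ᵀ * (v.map ρ)ᵀᴴ = 1 := by
  have hρS : ((v.map (antipode R))ᵀ).map ρ = (v.map ρ)ᵀᴴ := Matrix.ext fun i j => hρ j i
  rw [← hρS, ← transpose_map, ← Matrix.map_mul, hv.transpose_mul_transpose_map_antipode hS,
    Matrix.map_one _ (map_zero ρ) (map_one ρ)]

end Antipode

section SpatialReshuffle

variable {K ι κ n : Type*}

/-- The exchange of the space and time directions of a gate `w`, given as a matrix of blocks:
the output and input legs of `w` are `(i, a)` and `(j, b)`, those of its reshuffling are `(i, b)`
and `(a, j)`. -/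
def spatialReshuffle (w : Matrix ι κ (Matrix n n K)) : Matrix (ι × n) (n × κ) K :=
  of fun p q => w p.1 q.2 q.1 p.2

theorem transpose_mul_conjTranspose_transpose_apply_apply [NonUnitalNonAssocSemiring K] [Star K]
    [Fintype ι] [Fintype n] (w : Matrix ι κ (Matrix n n K)) (i j : κ) (a b : n) :
    (wᵀ * wᵀᴴ) i j a b = ∑ k, ∑ c, w k i a c * star (w k j b c) := by
  simp [mul_apply, Matrix.sum_apply, star_eq_conjTranspose]

theorem conjTranspose_spatialReshuffle_mul_self [NonUnitalCommSemiring K] [Star K] [Fintype ι]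
    [Fintype n] (w : Matrix ι κ (Matrix n n K)) :
    (spatialReshuffle w)ᴴ * spatialReshuffle w =
      (comp κ κ n n K (wᵀ * wᵀᴴ))ᵀ.submatrix Prod.swap Prod.swap := by
  ext ⟨a, i⟩ ⟨b, j⟩
  simp [spatialReshuffle, mul_apply, Fintype.sum_prod_type,
    transpose_mul_conjTranspose_transpose_apply_apply, mul_comm]

end SpatialReshuffle

theorem dualGateMatrix_eq_spatialReshuffle {A : Type*} [Ring A] [Algebra ℂ A] {dρ dv : ℕ}
    (ρ : A →ₐ[ℂ] Matrix (Fin dρ) (Fin dρ) ℂ) (v : Fin dv → Fin dv → A) :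
    dualGateMatrix ρ v = spatialReshuffle ((of v).map ρ.toRingHom) :=
  rfl

theorem hopf_gate_dual_unitary_general {R A K ι n : Type*} [CommSemiring R] [Semiring A]
    [HopfAlgebra R A] [CommSemiring K] [StarRing K] [Fintype ι] [DecidableEq ι] [Fintype n]
    [DecidableEq n] {v : Matrix ι ι A} (hv : IsCorepresentation R v)
    (hS : ∀ i j, HopfAlgebra.antipode R (HopfAlgebra.antipode R (v i j)) = v i j)
    (ρ : A →+* Matrix n n K)
    (hρ : ∀ i j, ρ (HopfAlgebra.antipode R (v i j)) = (ρ (v j i))ᴴ) :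
    ((spatialReshuffle (v.map ρ))ᴴ * spatialReshuffle (v.map ρ) = 1 ∧
      spatialReshuffle (v.map ρ) * (spatialReshuffle (v.map ρ))ᴴ = 1) ∧
    ∀ (i j : ι) (a b : n),
      ∑ k, ∑ c, ρ (v k j) a c * star (ρ (v k i) b c) =
        (if i = j then 1 else 0) * (if a = b then 1 else 0) := by
  have hw : (v.map ρ)ᵀ * (v.map ρ)ᵀᴴ = 1 := hv.transpose_map_mul_conjTranspose_self hS ρ hρ
  have hU : (spatialReshuffle (v.map ρ))ᴴ * spatialReshuffle (v.map ρ) = 1 := by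
    rw [conjTranspose_spatialReshuffle_mul_self, hw, comp_one, transpose_one,
      submatrix_one _ Prod.swap_injective]
  refine ⟨⟨hU, (mul_eq_one_comm_of_equiv (.prodComm _ _)).mp hU⟩, fun i j a b => ?_⟩
  calc ∑ k, ∑ c, ρ (v k j) a c * star (ρ (v k i) b c)
      = ((v.map ρ)ᵀ * (v.map ρ)ᵀᴴ) j i a b :=
        (transpose_mul_conjTranspose_transpose_apply_apply (v.map ρ) j i a b).symm
    _ = (1 : Matrix ι ι (Matrix n n K)) j i a b := by rw [hw]
    _ = (if i = j then 1 else 0) * (if a = b then 1 else 0) := by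
        obtain rfl | hij := eq_or_ne i j
        · simp [one_apply]
        · simp [hij, hij.symm]

/-- **Dual unitarity.** Let `A` be a Hopf algebra over `ℂ` with involutive
antipode (`S ∘ S = id`) and a `*`-structure; let `(v_{ij})` be a corepresentation with
`S(v_{ij}) = (v_{ji})*` and `ρ` a `*`-representation (`ρ(x*) = ρ(x)ᴴ`). Then the
reshuffled matrix `Ũ_{(i,b),(a,j)} = ρ(v_{ij})_{ab}` is unitary; equivalently,
`Σ_k Σ_c ρ(v_{kj})_{ac} · conj(ρ(v_{ki})_{bc}) = δ_{ij} δ_{ab}` for all `i, j, a, b`. -/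
theorem hopf_gate_dual_unitary
    {A : Type*} [Ring A] [HopfAlgebra ℂ A] [StarRing A] [StarModule ℂ A]
    (hS2 : ∀ x : A, HopfAlgebra.antipode (R := ℂ) (HopfAlgebra.antipode (R := ℂ) x) = x)
    {dρ dv : ℕ} (ρ : A →ₐ[ℂ] Matrix (Fin dρ) (Fin dρ) ℂ)
    (hρstar : ∀ x : A, ρ (star x) = (ρ x)ᴴ)
    (v : Fin dv → Fin dv → A)
    (hvΔ : ∀ i j, Coalgebra.comul (R := ℂ) (v i j) = ∑ k, v i k ⊗ₜ[ℂ] v k j)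
    (hvε : ∀ i j, Coalgebra.counit (R := ℂ) (v i j) = if i = j then (1 : ℂ) else 0)
    (hvS : ∀ i j, HopfAlgebra.antipode (R := ℂ) (v i j) = star (v j i)) :
    ((dualGateMatrix ρ v)ᴴ * dualGateMatrix ρ v = 1 ∧
      dualGateMatrix ρ v * (dualGateMatrix ρ v)ᴴ = 1) ∧
    (∀ (i j : Fin dv) (a b : Fin dρ),
      ∑ k, ∑ c, ρ (v k j) a c * star (ρ (v k i) b c) =
        (if i = j then (1 : ℂ) else 0) * (if a = b then 1 else 0)) := by
  rw [dualGateMatrix_eq_spatialReshuffle]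
  exact hopf_gate_dual_unitary_general (R := ℂ) (v := of v) ⟨hvΔ, hvε⟩ (fun _ _ => hS2 _)
    ρ.toRingHom fun i j => (congrArg ρ (hvS i j)).trans (hρstar _)
end

section
/- (MPO representation of the triangular circuit network, Eq. (3) of the paper.) Let A be a bialgebra over ℂ, ρ a d_ρ-dimensional representation, (v_{ij}) a d_v-dimensional corepresentation, and define the gate entries U^{(i,a)}_{(b,j)} := ρ(v_{ij})_{ab}. Define linear maps G^v_{ij}, G^ρ_{ab} : A → A by G^v_{ij}(x) := x·v_{ij} and G^ρ_{ab}(x) := Σ x₍₁₎ · ρ(x₍₂₎)_{ab}. Define the triangular network recursively: [U△^{(1)}]^{(i),(a)}_{(b,j)} := U^{(i,a)}_{(b,j)}, and for n ≥ 2, [U△^{(n)}]^{(i₁,…,iₙ),(a₁,…,aₙ)}_{(b₁,j₁,…,bₙ,jₙ)} := Σ over i'₂,…,i'ₙ and a'₁,…,a'_{n−1} of [U△^{(n−1)}]^{(i₂,…,iₙ),(a₁,…,a_{n−1})}_{(a'₁,i'₂, a'₂,i'₃, …, a'_{n−1},i'ₙ)} · Π_{m=1}^{n} U^{(i'_m,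 a'_m)}_{(b_m, j_m)}, where i'₁ := i₁ and a'ₙ := aₙ. Then for every n ≥ 1 and all index tuples, [U△^{(n)}]^{(i₁,…,iₙ),(a₁,…,aₙ)}_{(b₁,j₁,…,bₙ,jₙ)} = ε( G^ρ_{a₁b₁}( G^v_{i₁j₁}( G^ρ_{a₂b₂}( ⋯ G^ρ_{aₙbₙ}( G^v_{iₙjₙ}(1) ) ⋯ ))))—i.e., the triangular 2D tensor network equals a matrix product operator with bond space A. -/
open scoped TensorProduct

/-- The linear map picking out the `(a, b)` entry of a matrix. -/
def entryLM {d : ℕ} (a b : Fin d) : Matrix (Fin d) (Fin d) ℂ →ₗ[ℂ] ℂ where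
  toFun M := M a b
  map_add' _ _ := rfl
  map_smul' _ _ := rfl

/-- The Sweedler contraction `A ⊗ A →ₗ[ℂ] A` sending `y ⊗ z` to `ρ(z)_{a b} • y`. -/
noncomputable def sweedlerContract {A : Type*} [Ring A] [Algebra ℂ A] {d : ℕ}
    (ρ : A →ₐ[ℂ] Matrix (Fin d) (Fin d) ℂ) (a b : Fin d) :
    A ⊗[ℂ] A →ₗ[ℂ] A :=
  (TensorProduct.rid ℂ A).toLinearMap ∘ₗ
    TensorProduct.map LinearMap.id ((entryLM a b) ∘ₗ ρ.toLinearMap)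

/-- `G^ρ_{ab}(x) = Σ x₍₁₎ · ρ(x₍₂₎)_{ab}`. -/
noncomputable def Grho {A : Type*} [Ring A] [Bialgebra ℂ A] {dρ : ℕ}
    (ρ : A →ₐ[ℂ] Matrix (Fin dρ) (Fin dρ) ℂ) (a b : Fin dρ) (x : A) : A :=
  sweedlerContract ρ a b (Coalgebra.comul (R := ℂ) x)

/-- `G^v_{ij}(x) = x · v_{ij}`. -/
def Gv {A : Type*} [Ring A] {dv : ℕ} (v : Fin dv → Fin dv → A) (i j : Fin dv) (x : A) : A :=
  x * v i j

/-- The entries `U^{(i,a)}_{(b,j)} = ρ(v_{ij})_{ab}` of the elementary gate. -/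
noncomputable def gateEntry {A : Type*} [Ring A] [Bialgebra ℂ A] {dρ dv : ℕ}
    (ρ : A →ₐ[ℂ] Matrix (Fin dρ) (Fin dρ) ℂ) (v : Fin dv → Fin dv → A)
    (i : Fin dv) (a b : Fin dρ) (j : Fin dv) : ℂ :=
  ρ (v i j) a b

/-- The triangular tensor network `U△^{(n+1)}`, defined recursively:
`U△^{(1)} = U`, and `U△^{(n+1)}` is obtained from `U△^{(n)}` by contracting a bottom row
of `n+1` elementary gates, with `i'₁ = i₁` and `a'_{n+1} = a_{n+1}`. -/
noncomputable def triangleNetwork {A : Type*} [Ring A] [Bialgebra ℂ A] {dρ dv : ℕ}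
    (ρ : A →ₐ[ℂ] Matrix (Fin dρ) (Fin dρ) ℂ) (v : Fin dv → Fin dv → A) :
    (n : ℕ) → (Fin (n + 1) → Fin dv) → (Fin (n + 1) → Fin dρ) →
      (Fin (n + 1) → Fin dρ) → (Fin (n + 1) → Fin dv) → ℂ
  | 0, i, a, b, j => gateEntry ρ v (i 0) (a 0) (b 0) (j 0)
  | (n + 1), i, a, b, j =>
      ∑ i' : Fin (n + 1) → Fin dv, ∑ a' : Fin (n + 1) → Fin dρ,
        triangleNetwork ρ v n (Fin.tail i) (Fin.init a) a' i' *
          ∏ m : Fin (n + 2),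
            gateEntry ρ v ((Fin.cons (i 0) i' : Fin (n + 2) → Fin dv) m)
              ((Fin.snoc a' (a (Fin.last (n + 1))) : Fin (n + 2) → Fin dρ) m)
              (b m) (j m)

/-- The matrix product operator `ε(G^ρ_{a₁b₁}(G^v_{i₁j₁}(⋯ G^ρ_{aₙbₙ}(G^v_{iₙjₙ}(1))⋯)))`:
the element of `A` obtained by alternately applying `G^v` and `G^ρ` to `1`. -/
noncomputable def mpoWord {A : Type*} [Ring A] [Bialgebra ℂ A] {dρ dv : ℕ}
    (ρ : A →ₐ[ℂ] Matrix (Fin dρ) (Fin dρ) ℂ) (v : Fin dv → Fin dv → A) :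
    (n : ℕ) → (Fin n → Fin dv) → (Fin n → Fin dρ) → (Fin n → Fin dρ) → (Fin n → Fin dv) → A
  | 0, _, _, _, _ => 1
  | (n + 1), i, a, b, j =>
      Grho ρ (a 0) (b 0) (Gv v (i 0) (j 0)
        (mpoWord ρ v n (Fin.tail i) (Fin.tail a) (Fin.tail b) (Fin.tail j)))

/-! Pulling each `G^ρ` through the `G^v` to its right splits the bottom row of gates off the word:
since `Δ` is multiplicative, `G^ρ_{ab} ∘ G^v_{ij} = ∑ U^{(k,c)}_{(b,j)} • G^v_{ik} ∘ G^ρ_{ac}`,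
summed over `k` and `c`. Afterwards the rightmost `G^ρ` acts on `1` and becomes `δ`, and the
leftmost `G^v` becomes `δ` under `ε`. In between, the `m`-th `G^ρ` is paired with the `(m+1)`-st
`G^v`: this is the word of a triangle with one row fewer. -/

theorem sum_pi_fin_succ {n : ℕ} {α : Fin (n + 1) → Type*} [∀ m, Fintype (α m)] {M : Type*}
    [AddCommMonoid M] (f : (∀ m, α m) → M) :
    ∑ x, f x = ∑ x₀, ∑ x : ∀ m : Fin n, α m.succ, f (Fin.cons x₀ x) := by
  rw [← Fintype.sum_prod_type']
  exact ((Fin.consEquiv α).sum_comp f).symm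

section SweedlerContract

variable {A : Type*} [Ring A] [Algebra ℂ A] {d : ℕ} (ρ : A →ₐ[ℂ] Matrix (Fin d) (Fin d) ℂ)
  (a b : Fin d)

theorem sweedlerContract_tmul (y z : A) : sweedlerContract ρ a b (y ⊗ₜ[ℂ] z) = ρ z a b • y :=
  rfl

theorem sweedlerContract_mul_tmul (X : A ⊗[ℂ] A) (y z : A) :
    sweedlerContract ρ a b (X * y ⊗ₜ[ℂ] z) =
      ∑ c, ρ z c b • (sweedlerContract ρ a c X * y) := by
  induction X using TensorProduct.induction_on with
  | zero => simp
  | tmul p q =>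
    simp only [Algebra.TensorProduct.tmul_mul_tmul, sweedlerContract_tmul, map_mul,
      Matrix.mul_apply, Finset.sum_smul, smul_mul_assoc, smul_smul, mul_comm]
  | add X Y hX hY =>
    simp only [add_mul, map_add, hX, hY, smul_add, Finset.sum_add_distrib]

end SweedlerContract

section Network

variable {A : Type*} [Ring A] [Bialgebra ℂ A] {dρ dv : ℕ}
  (ρ : A →ₐ[ℂ] Matrix (Fin dρ) (Fin dρ) ℂ) (v : Fin dv → Fin dv → A)

theorem Grho_sum {ι : Type*} (a b : Fin dρ) (s : Finset ι) (x : ι → A) :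
    Grho ρ a b (∑ t ∈ s, x t) = ∑ t ∈ s, Grho ρ a b (x t) := by
  simp only [Grho, map_sum]

theorem Grho_smul (a b : Fin dρ) (c : ℂ) (x : A) : Grho ρ a b (c • x) = c • Grho ρ a b x := by
  simp only [Grho, map_smul]

theorem Grho_one (a b : Fin dρ) : Grho ρ a b (1 : A) = if a = b then 1 else 0 := by
  rw [Grho, Bialgebra.comul_one, Algebra.TensorProduct.one_def, sweedlerContract_tmul, map_one,
    Matrix.one_apply, ite_smul, one_smul, zero_smul]

theorem Grho_Gv (hvΔ : ∀ i j, Coalgebra.comul (R := ℂ) (v i j) = ∑ k, v i k ⊗ₜ[ℂ] v k j)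
    (a b : Fin dρ) (i j : Fin dv) (x : A) :
    Grho ρ a b (Gv v i j x) =
      ∑ k, ∑ c, gateEntry ρ v k c b j • Gv v i k (Grho ρ a c x) := by
  simp only [Grho, Gv, Bialgebra.comul_mul, hvΔ, Finset.mul_sum, map_sum,
    sweedlerContract_mul_tmul, gateEntry]

theorem counit_Gv
    (hvε : ∀ i j, Coalgebra.counit (R := ℂ) (v i j) = if i = j then (1 : ℂ) else 0)
    (i j : Fin dv) (x : A) :
    Coalgebra.counit (R := ℂ) (Gv v i j x) = if i = j then Coalgebra.counit (R := ℂ) x else 0 := by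
  rw [Gv, Bialgebra.counit_mul, hvε, mul_ite, mul_one, mul_zero]

/-- The entries of a row of `n` elementary gates side by side; the gates share no indices. -/
noncomputable def gateRow {n : ℕ} (i : Fin n → Fin dv) (a b : Fin n → Fin dρ)
    (j : Fin n → Fin dv) : ℂ :=
  ∏ m, gateEntry ρ v (i m) (a m) (b m) (j m)

theorem gateRow_cons {n : ℕ} (k : Fin dv) (i : Fin n → Fin dv) (c : Fin dρ) (a : Fin n → Fin dρ)
    (b : Fin (n + 1) → Fin dρ) (j : Fin (n + 1) → Fin dv) :
    gateRow ρ v (Fin.cons k i) (Fin.cons c a) b j =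
      gateEntry ρ v k c (b 0) (j 0) * gateRow ρ v i a (Fin.tail b) (Fin.tail j) := by
  simp only [gateRow, Fin.prod_univ_succ, Fin.cons_zero, Fin.cons_succ, Fin.tail]

theorem mpoWord_succ_eq_sum_gateRow
    (hvΔ : ∀ i j, Coalgebra.comul (R := ℂ) (v i j) = ∑ k, v i k ⊗ₜ[ℂ] v k j) (n : ℕ)
    (i : Fin (n + 1) → Fin dv) (a b : Fin (n + 1) → Fin dρ) (j : Fin (n + 1) → Fin dv) :
    mpoWord ρ v (n + 1) i a b j =
      ∑ i' : Fin (n + 1) → Fin dv, ∑ a' : Fin n → Fin dρ,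
        gateRow ρ v i' (Fin.snoc a' (a (Fin.last n))) b j •
          Gv v (i 0) (i' 0) (mpoWord ρ v n (Fin.tail i) (Fin.init a) a' (Fin.tail i')) := by
  induction n with
  | zero =>
    rw [mpoWord, Grho_Gv ρ v hvΔ, sum_pi_fin_succ]
    simp [mpoWord, Grho_one, gateRow, Gv, Fin.snoc]
  | succ n ih =>
    have Grho_mpoWord_tail (c : Fin dρ) :
        Grho ρ (a 0) c
            (mpoWord ρ v (n + 1) (Fin.tail i) (Fin.tail a) (Fin.tail b) (Fin.tail j)) =
          ∑ i' : Fin (n + 1) → Fin dv, ∑ a' : Fin n → Fin dρ,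
            gateRow ρ v i' (Fin.snoc a' (a (Fin.last (n + 1)))) (Fin.tail b) (Fin.tail j) •
              mpoWord ρ v (n + 1) (Fin.tail i) (Fin.init a) (Fin.cons c a') i' := by
      rw [ih]
      simp only [Grho_sum, Grho_smul]
      -- `Fin.tail` and `Fin.init` commute definitionally, so each summand unfolds an `mpoWord`.
      rfl
    rw [mpoWord, Grho_Gv ρ v hvΔ, sum_pi_fin_succ]
    refine Finset.sum_congr rfl fun k _ => ?_
    simp only [sum_pi_fin_succ (α := fun _ : Fin (n + 1) => Fin dρ),
      ← Fin.cons_snoc_eq_snoc_cons, gateRow_cons, Grho_mpoWord_tail, Gv, Finset.sum_mul,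
      Finset.smul_sum, smul_mul_assoc, smul_smul, Fin.cons_zero, Fin.tail_cons]
    exact Finset.sum_comm

theorem counit_mpoWord_succ
    (hvΔ : ∀ i j, Coalgebra.comul (R := ℂ) (v i j) = ∑ k, v i k ⊗ₜ[ℂ] v k j)
    (hvε : ∀ i j, Coalgebra.counit (R := ℂ) (v i j) = if i = j then (1 : ℂ) else 0) (n : ℕ)
    (i : Fin (n + 1) → Fin dv) (a b : Fin (n + 1) → Fin dρ) (j : Fin (n + 1) → Fin dv) :
    Coalgebra.counit (R := ℂ) (mpoWord ρ v (n + 1) i a b j) =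
      ∑ i' : Fin n → Fin dv, ∑ a' : Fin n → Fin dρ,
        Coalgebra.counit (R := ℂ) (mpoWord ρ v n (Fin.tail i) (Fin.init a) a' i') *
          gateRow ρ v (Fin.cons (i 0) i') (Fin.snoc a' (a (Fin.last n))) b j := by
  rw [mpoWord_succ_eq_sum_gateRow ρ v hvΔ, sum_pi_fin_succ, map_sum, Fintype.sum_eq_single (i 0)]
  · simp only [map_sum, map_smul, counit_Gv v hvε, Fin.cons_zero, Fin.tail_cons, if_true,
      smul_eq_mul, mul_comm]
  · intro k hk
    simp only [map_sum, map_smul, counit_Gv v hvε, Fin.cons_zero, if_neg hk.symm, smul_zero,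
      Finset.sum_const_zero]

end Network

/-- **Eq. (3) of the paper.** The triangular 2D tensor network built from the
gate `U^{(i,a)}_{(b,j)} = ρ(v_{ij})_{ab}` equals the matrix product operator with bond
space `A`: for every `n ≥ 1` (here `n+1` with `n : ℕ`) and all index tuples,
`[U△^{(n)}]^{i,a}_{b,j} = ε(G^ρ_{a₁b₁}(G^v_{i₁j₁}(⋯ G^ρ_{aₙbₙ}(G^v_{iₙjₙ}(1))⋯)))`. -/
theorem triangle_network_eq_mpo
    {A : Type*} [Ring A] [Bialgebra ℂ A] {dρ dv : ℕ}
    (ρ : A →ₐ[ℂ] Matrix (Fin dρ) (Fin dρ) ℂ) (v : Fin dv → Fin dv → A)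
    (hvΔ : ∀ i j, Coalgebra.comul (R := ℂ) (v i j) = ∑ k, v i k ⊗ₜ[ℂ] v k j)
    (hvε : ∀ i j, Coalgebra.counit (R := ℂ) (v i j) = if i = j then (1 : ℂ) else 0)
    (n : ℕ) (i : Fin (n + 1) → Fin dv) (a : Fin (n + 1) → Fin dρ)
    (b : Fin (n + 1) → Fin dρ) (j : Fin (n + 1) → Fin dv) :
    triangleNetwork ρ v n i a b j =
      Coalgebra.counit (R := ℂ) (mpoWord ρ v (n + 1) i a b j) := by
  induction n with
  | zero =>
    rw [counit_mpoWord_succ ρ v hvΔ hvε]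
    simp [triangleNetwork, mpoWord, gateRow, Fin.snoc]
  | succ n ih =>
    rw [counit_mpoWord_succ ρ v hvΔ hvε, triangleNetwork]
    simp only [ih, gateRow]
end

section
/- (Key commutation identity, Eq. (53) of the paper.) Let A be a weak bialgebra over ℂ. Then for all z, w ∈ A the following identities hold in A ⊗ A: (i) Σ z₍₁₎·ε(1₍₁₎·z₍₂₎) ⊗ w·1₍₂₎ = Σ 1₍₁₎·z ⊗ w·1₍₂₎; and (ii) Σ 1₍₁'₎·z₍₁₎·ε(1₍₁₎·z₍₂₎) ⊗ w₍₂₎·1₍₂₎·ε(w₍₁₎·1₍₂'₎) = Σ 1₍₁₎·z ⊗ w·1₍₂₎; where Δ(1) = Σ 1₍₁₎ ⊗ 1₍₂₎ = Σ 1₍₁'₎ ⊗ 1₍₂'₎ are two independent Sweedler expansions of Δ(1), and Δ(z) = Σ z₍₁₎ ⊗ z₍₂₎, Δ(w) = Σ w₍₁₎ ⊗ w₍₂₎. -/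
/-!
Multiplying the weak unit identity `(Δ ⊗ id) Δ(1) = (1 ⊗ Δ(1)) · (Δ(1) ⊗ 1)` on the right
by `Δ(z) ⊗ 1` absorbs `Δ(1)` into `Δ(z)`, and gives
`(1 ⊗ Δ(1)) · (Δ(z) ⊗ 1) = (Δ ⊗ id) (Δ(1) · (z ⊗ 1))`. Applying `id ⊗ ε ⊗ id` turns the left side
into `(id ⊗ ε_t) Δ(z)` and, by the counit law, the right side into `Δ(1) · (z ⊗ 1)`.
Multiplying instead on the left by `1 ⊗ Δ(w)` and using coassociativity gives
`(ε_s ⊗ id) Δ(w) = (1 ⊗ w) · Δ(1)`. The product of the two identities collapses because `Δ(1)` is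
idempotent.
-/

open scoped TensorProduct

section WeakBialgebra

variable {A : Type*} [Ring A] [Algebra ℂ A] [Coalgebra ℂ A]

/-- The target counital map `ε_t : A →ₗ A`, `ε_t(y) = Σ ε(1₍₁₎·y)·1₍₂₎`. -/
noncomputable def epsTL : A →ₗ[ℂ] A :=
  (TensorProduct.lid ℂ A).toLinearMap ∘ₗ
    (TensorProduct.map (Coalgebra.counit (R := ℂ)) LinearMap.id) ∘ₗ
      (LinearMap.mulLeft ℂ (Coalgebra.comul (R := ℂ) (1 : A))) ∘ₗ
        ((TensorProduct.mk ℂ A A).flip (1 : A))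

/-- The source counital map `ε_s : A →ₗ A`, `ε_s(x) = Σ 1₍₁₎·ε(x·1₍₂₎)`. -/
noncomputable def epsSL : A →ₗ[ℂ] A :=
  (TensorProduct.rid ℂ A).toLinearMap ∘ₗ
    (TensorProduct.map LinearMap.id (Coalgebra.counit (R := ℂ))) ∘ₗ
      (LinearMap.mulRight ℂ (Coalgebra.comul (R := ℂ) (1 : A))) ∘ₗ
        (TensorProduct.mk ℂ A A (1 : A))

end WeakBialgebra

open Coalgebra LinearMap TensorProduct

section MiddleContraction

variable {R M N P : Type*} [CommSemiring R] [AddCommMonoid M] [Module R M]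
  [AddCommMonoid N] [Module R N] [AddCommMonoid P] [Module R P]

/-- The map `id ⊗ φ ⊗ id` applying a functional `φ` to the middle factor of `(M ⊗ N) ⊗ P`. -/
def middleContraction (φ : N →ₗ[R] R) : (M ⊗[R] N) ⊗[R] P →ₗ[R] M ⊗[R] P :=
  ((TensorProduct.rid R M).toLinearMap ∘ₗ φ.lTensor M).rTensor P

theorem middleContraction_tmul (φ : N →ₗ[R] R) (m : M) (n : N) (p : P) :
    middleContraction φ ((m ⊗ₜ[R] n) ⊗ₜ[R] p) = (φ n • m) ⊗ₜ[R] p := by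
  simp [middleContraction]

theorem middleContraction_assoc_symm (φ : N →ₗ[R] R) (t : M ⊗[R] (N ⊗[R] P)) :
    middleContraction φ ((TensorProduct.assoc R M N P).symm t) =
      ((TensorProduct.lid R P).toLinearMap ∘ₗ φ.rTensor P).lTensor M t := by
  suffices middleContraction φ ∘ₗ (TensorProduct.assoc R M N P).symm.toLinearMap =
      ((TensorProduct.lid R P).toLinearMap ∘ₗ φ.rTensor P).lTensor M from
    LinearMap.congr_fun this t
  ext m n p
  simp [middleContraction_tmul, smul_tmul]

variable {C : Type*} [AddCommMonoid C] [Module R C] [Coalgebra R C]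

theorem middleContraction_counit_rTensor_comul (t : C ⊗[R] P) :
    middleContraction counit ((comul (R := R)).rTensor P t) = t := by
  have counit_law : ((TensorProduct.rid R C).toLinearMap ∘ₗ counit.lTensor C) ∘ₗ comul =
      LinearMap.id := by
    ext c
    simp
  rw [middleContraction, ← rTensor_comp_apply, counit_law, rTensor_id_apply]

theorem middleContraction_counit_lTensor_comul (t : M ⊗[R] C) :
    middleContraction counit
      ((TensorProduct.assoc R M C C).symm ((comul (R := R)).lTensor M t)) = t := by
  have counit_law : ((TensorProduct.lid R C).toLinearMap ∘ₗ counit.rTensor C) ∘ₗ comul =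
      LinearMap.id := by
    ext c
    simp
  rw [middleContraction_assoc_symm, ← lTensor_comp_apply, counit_law, lTensor_id_apply]

end MiddleContraction

section Algebra

variable {R A B C : Type*} [CommSemiring R] [Semiring A] [Algebra R A] [Semiring B] [Algebra R B]
  [Semiring C] [Algebra R C]

/-- The map `y ↦ Σ φ(t₍₁₎·y)·t₍₂₎` attached to a functional `φ` on `B` and a tensor
`t = Σ t₍₁₎ ⊗ t₍₂₎` in `B ⊗ C`; it is the target counital map when `φ = ε` and `t = Δ(1)`. -/
def leftContraction (φ : B →ₗ[R] R) (t : B ⊗[R] C) : B →ₗ[R] C :=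
  (TensorProduct.lid R C).toLinearMap ∘ₗ φ.rTensor C ∘ₗ mulLeft R t ∘ₗ (mk R B C).flip 1

/-- The map `x ↦ Σ s₍₁₎·φ(x·s₍₂₎)` attached to a functional `φ` on `B` and a tensor
`s = Σ s₍₁₎ ⊗ s₍₂₎` in `A ⊗ B`; it is the source counital map when `φ = ε` and `s = Δ(1)`. -/
def rightContraction (φ : B →ₗ[R] R) (s : A ⊗[R] B) : B →ₗ[R] A :=
  (TensorProduct.rid R A).toLinearMap ∘ₗ φ.lTensor A ∘ₗ mulRight R s ∘ₗ mk R A B 1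

theorem middleContraction_mul_eq_lTensor_leftContraction (φ : B →ₗ[R] R)
    (s : A ⊗[R] B) (t : B ⊗[R] C) :
    middleContraction φ ((TensorProduct.assoc R A B C).symm (1 ⊗ₜ[R] t) * s ⊗ₜ[R] 1) =
      (leftContraction φ t).lTensor A s := by
  induction s with
  | zero => simp
  | add s s' hs hs' => simp only [add_tmul, mul_add, map_add, hs, hs']
  | tmul a b =>
    induction t with
    | zero => simp [leftContraction]
    | add t t' ht ht' => simp_all [leftContraction, tmul_add, add_mul]
    | tmul b' c => simp [leftContraction, middleContraction_tmul, smul_tmul]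

theorem middleContraction_mul_eq_rTensor_rightContraction (φ : B →ₗ[R] R)
    (s : A ⊗[R] B) (t : B ⊗[R] C) :
    middleContraction φ ((TensorProduct.assoc R A B C).symm (1 ⊗ₜ[R] t) * s ⊗ₜ[R] 1) =
      (rightContraction φ s).rTensor C t := by
  induction t with
  | zero => simp
  | add t t' ht ht' => simp only [tmul_add, add_mul, map_add, ht, ht']
  | tmul b c =>
    induction s with
    | zero => simp [rightContraction]
    | add s s' hs hs' => simp_all [rightContraction, add_tmul, mul_add]
    | tmul a b' => simp [rightContraction, middleContraction_tmul]

theorem assoc_symm_mul (x y : A ⊗[R] (B ⊗[R] C)) :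
    (TensorProduct.assoc R A B C).symm (x * y) =
      (TensorProduct.assoc R A B C).symm x * (TensorProduct.assoc R A B C).symm y :=
  map_mul (Algebra.TensorProduct.assoc R R R A B C).symm x y

theorem rTensor_mul_tmul_one {f : A →ₗ[R] B} (hf : ∀ x y, f (x * y) = f x * f y)
    (t : A ⊗[R] C) (a : A) :
    f.rTensor C (t * a ⊗ₜ[R] 1) = f.rTensor C t * f a ⊗ₜ[R] 1 := by
  induction t with
  | zero => simp
  | add t t' ht ht' => simp only [map_add, add_mul, ht, ht']
  | tmul x y => simp [hf]

theorem lTensor_one_tmul_mul {f : A →ₗ[R] B} (hf : ∀ x y, f (x * y) = f x * f y)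
    (a : A) (t : C ⊗[R] A) :
    f.lTensor C (1 ⊗ₜ[R] a * t) = 1 ⊗ₜ[R] f a * f.lTensor C t := by
  induction t with
  | zero => simp
  | add t t' ht ht' => simp only [map_add, mul_add, ht, ht']
  | tmul x y => simp [hf]

theorem lTensor_mulLeft_apply (b : B) (t : A ⊗[R] B) :
    (mulLeft R b).lTensor A t = 1 ⊗ₜ[R] b * t := by
  rw [← mulLeft_apply R, mulLeft_tmul, mulLeft_one, lTensor]

theorem rTensor_mulRight_apply (a : A) (t : A ⊗[R] B) :
    (mulRight R a).rTensor B t = t * a ⊗ₜ[R] 1 := by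
  rw [← mulRight_apply R, mulRight_tmul, mulRight_one, rTensor]

theorem map_mulRight_mulLeft_apply (a : A) (b : B) (t : A ⊗[R] B) :
    TensorProduct.map (mulRight R a) (mulLeft R b) t = 1 ⊗ₜ[R] b * (t * a ⊗ₜ[R] 1) := by
  rw [← lTensor_comp_rTensor, LinearMap.comp_apply, rTensor_mulRight_apply, lTensor_mulLeft_apply]

end Algebra

section Counital

variable {R A : Type*} [CommSemiring R] [Semiring A] [Algebra R A] [Coalgebra R A]

variable (R A) in
/-- The target counital map `ε_t(y) = Σ ε(1₍₁₎·y)·1₍₂₎` over an arbitrary base; `epsTL` is the case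
`R = ℂ`. -/
def targetCounit : A →ₗ[R] A := leftContraction counit (comul 1)

variable (R A) in
/-- The source counital map `ε_s(x) = Σ 1₍₁₎·ε(x·1₍₂₎)` over an arbitrary base; `epsSL` is the case
`R = ℂ`. -/
def sourceCounit : A →ₗ[R] A := rightContraction counit (comul 1)

theorem lTensor_targetCounit_comul
    (comul_mul : ∀ x y : A, comul (R := R) (x * y) = comul x * comul y)
    (weak_unit : (comul (R := R)).rTensor A (comul 1) =
      (TensorProduct.assoc R A A A).symm (1 ⊗ₜ[R] comul (1 : A)) * comul 1 ⊗ₜ[R] 1)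
    (z : A) :
    (targetCounit R A).lTensor A (comul z) = comul 1 * z ⊗ₜ[R] 1 := by
  set Δ₁ : A ⊗[R] A := comul 1
  have absorb : Δ₁ ⊗ₜ[R] (1 : A) * comul z ⊗ₜ[R] 1 = comul z ⊗ₜ[R] 1 := by
    rw [Algebra.TensorProduct.tmul_mul_tmul, ← comul_mul, one_mul, one_mul]
  calc (targetCounit R A).lTensor A (comul z)
    _ = middleContraction counit
          ((TensorProduct.assoc R A A A).symm (1 ⊗ₜ[R] Δ₁) * comul z ⊗ₜ[R] 1) :=
      (middleContraction_mul_eq_lTensor_leftContraction counit (comul z) Δ₁).symm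
    _ = middleContraction counit (comul.rTensor A Δ₁ * comul z ⊗ₜ[R] 1) := by
      rw [weak_unit, mul_assoc, absorb]
    _ = middleContraction counit (comul.rTensor A (Δ₁ * z ⊗ₜ[R] 1)) := by
      rw [rTensor_mul_tmul_one comul_mul]
    _ = Δ₁ * z ⊗ₜ[R] 1 := middleContraction_counit_rTensor_comul _

theorem rTensor_sourceCounit_comul
    (comul_mul : ∀ x y : A, comul (R := R) (x * y) = comul x * comul y)
    (weak_unit : (comul (R := R)).rTensor A (comul 1) =
      (TensorProduct.assoc R A A A).symm (1 ⊗ₜ[R] comul (1 : A)) * comul 1 ⊗ₜ[R] 1)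
    (w : A) :
    (sourceCounit R A).rTensor A (comul w) = 1 ⊗ₜ[R] w * comul 1 := by
  set Δ₁ : A ⊗[R] A := comul 1
  let reassoc := (TensorProduct.assoc R A A A).symm
  have absorb : (1 : A) ⊗ₜ[R] comul w * 1 ⊗ₜ[R] Δ₁ = 1 ⊗ₜ[R] comul w := by
    rw [Algebra.TensorProduct.tmul_mul_tmul, ← comul_mul, mul_one, mul_one]
  calc (sourceCounit R A).rTensor A (comul w)
    _ = middleContraction counit (reassoc (1 ⊗ₜ[R] comul w) * Δ₁ ⊗ₜ[R] 1) :=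
      (middleContraction_mul_eq_rTensor_rightContraction counit Δ₁ (comul w)).symm
    _ = middleContraction counit (reassoc (1 ⊗ₜ[R] comul w) * comul.rTensor A Δ₁) := by
      rw [weak_unit, ← mul_assoc, ← assoc_symm_mul, absorb]
    _ = middleContraction counit (reassoc (1 ⊗ₜ[R] comul w * comul.lTensor A Δ₁)) := by
      rw [← coassoc_symm_apply, ← assoc_symm_mul]
    _ = middleContraction counit (reassoc (comul.lTensor A (1 ⊗ₜ[R] w * Δ₁))) := by
      rw [lTensor_one_tmul_mul comul_mul]
    _ = 1 ⊗ₜ[R] w * Δ₁ := middleContraction_counit_lTensor_comul _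

theorem weak_bialgebra_key_commutation_general
    (comul_mul : ∀ x y : A, comul (R := R) (x * y) = comul x * comul y)
    (weak_unit : (comul (R := R)).rTensor A (comul 1) =
      (TensorProduct.assoc R A A A).symm (1 ⊗ₜ[R] comul (1 : A)) * comul 1 ⊗ₜ[R] 1)
    (z w : A) :
    (mulLeft R w ∘ₗ targetCounit R A).lTensor A (comul z) =
        TensorProduct.map (mulRight R z) (mulLeft R w) (comul 1) ∧
      (sourceCounit R A).rTensor A (comul w) * (targetCounit R A).lTensor A (comul z) =
        TensorProduct.map (mulRight R z) (mulLeft R w) (comul 1) := by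
  have comul_one_idem : comul (R := R) (1 : A) * comul 1 = comul 1 := by
    rw [← comul_mul, one_mul]
  have target := lTensor_targetCounit_comul comul_mul weak_unit z
  have source := rTensor_sourceCounit_comul comul_mul weak_unit w
  rw [map_mulRight_mulLeft_apply]
  constructor
  · rw [lTensor_comp_apply, target, lTensor_mulLeft_apply]
  · rw [source, target, mul_assoc, ← mul_assoc (comul 1), comul_one_idem]

end Counital

/-- **Key commutation identity, Eq. (53) of the paper.**
Let `A` be a weak bialgebra over `ℂ`.  Then for all `z, w ∈ A`, in `A ⊗ A`:
(i) `Σ z₍₁₎·ε(1₍₁₎·z₍₂₎) ⊗ w·1₍₂₎ = Σ 1₍₁₎·z ⊗ w·1₍₂₎`, encoded as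
    `(id ⊗ (w·ε_t(−)))(Δz) = ((−·z) ⊗ (w·−))(Δ1)`; and
(ii) `Σ 1₍₁'₎·z₍₁₎·ε(1₍₁₎·z₍₂₎) ⊗ w₍₂₎·1₍₂₎·ε(w₍₁₎·1₍₂'₎) = Σ 1₍₁₎·z ⊗ w·1₍₂₎`,
    encoded as `((ε_s ⊗ id)(Δw)) · ((id ⊗ ε_t)(Δz)) = ((−·z) ⊗ (w·−))(Δ1)`. -/
theorem weak_bialgebra_key_commutation
    {A : Type*} [Ring A] [Algebra ℂ A] [Coalgebra ℂ A]
    -- prebialgebra: comultiplication is multiplicative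
    (hmul : ∀ x y : A,
      Coalgebra.comul (R := ℂ) (x * y) = Coalgebra.comul (R := ℂ) x * Coalgebra.comul (R := ℂ) y)
    -- weak unit axiom
    (hwu1 : (TensorProduct.map (Coalgebra.comul (R := ℂ)) LinearMap.id)
        (Coalgebra.comul (R := ℂ) (1 : A)) =
      (Coalgebra.comul (R := ℂ) (1 : A) ⊗ₜ[ℂ] (1 : A)) *
        ((TensorProduct.assoc ℂ A A A).symm ((1 : A) ⊗ₜ[ℂ] Coalgebra.comul (R := ℂ) (1 : A))))
    (hwu2 : (TensorProduct.map (Coalgebra.comul (R := ℂ)) LinearMap.id)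
        (Coalgebra.comul (R := ℂ) (1 : A)) =
      ((TensorProduct.assoc ℂ A A A).symm ((1 : A) ⊗ₜ[ℂ] Coalgebra.comul (R := ℂ) (1 : A))) *
        (Coalgebra.comul (R := ℂ) (1 : A) ⊗ₜ[ℂ] (1 : A)))
    -- weak counit axiom
    (hwc1 : ∀ x y z : A,
      Coalgebra.counit (R := ℂ) (x * y * z) =
        (LinearMap.mul' ℂ ℂ ∘ₗ TensorProduct.map
            (Coalgebra.counit (R := ℂ) ∘ₗ LinearMap.mulLeft ℂ x)
            (Coalgebra.counit (R := ℂ) ∘ₗ LinearMap.mulRight ℂ z))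
          (Coalgebra.comul (R := ℂ) y))
    (hwc2 : ∀ x y z : A,
      Coalgebra.counit (R := ℂ) (x * y * z) =
        (LinearMap.mul' ℂ ℂ ∘ₗ TensorProduct.map
            (Coalgebra.counit (R := ℂ) ∘ₗ LinearMap.mulRight ℂ z)
            (Coalgebra.counit (R := ℂ) ∘ₗ LinearMap.mulLeft ℂ x))
          (Coalgebra.comul (R := ℂ) y))
    (z w : A) :
    (TensorProduct.map LinearMap.id (LinearMap.mulLeft ℂ w ∘ₗ epsTL))
        (Coalgebra.comul (R := ℂ) z) =
      (TensorProduct.map (LinearMap.mulRight ℂ z) (LinearMap.mulLeft ℂ w))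
        (Coalgebra.comul (R := ℂ) (1 : A)) ∧
    ((TensorProduct.map epsSL LinearMap.id) (Coalgebra.comul (R := ℂ) w)) *
        ((TensorProduct.map LinearMap.id epsTL) (Coalgebra.comul (R := ℂ) z)) =
      (TensorProduct.map (LinearMap.mulRight ℂ z) (LinearMap.mulLeft ℂ w))
        (Coalgebra.comul (R := ℂ) (1 : A)) :=
  weak_bialgebra_key_commutation_general hmul hwu2 z w
end

section
/- (Finite group solvable tensors, Sec. IV.A of the paper.) Let G be a finite group, ρ : G → GL_d(ℂ) a group homomorphism into d×d invertible complex matrices, and g₁,…,g_d ∈ G arbitrary elements. Define tensors with horizontal indices x,y ∈ G and vertical indices a,b,i,j ∈ {1,…,d}: R[y|x; a,b] := δ_{x,y}·ρ(x)_{ab}; V[y|x; i,j] := δ_{i,j}·δ_{y, x·g_i}; η[x] := δ_{x,1}; ξ[x] := 1; and gate entries U^{(i,a)}_{(b,j)} := δ_{i,j}·ρ(g_i)_{ab}. Then these tensors satisfy all four relations of Eq. (1): (1) Σ_{z∈G} R[y|z; a,b]·V[z|x; i,j] = Σ_{z∈G} Σ_{k=1}^{d} Σ_{c=1}^{d} V[y|z;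 i,k]·R[z|x; a,c]·U^{(k,c)}_{(b,j)} for all x,y ∈ G and all a,b,i,j; (2) Σ_{y∈G} ξ[y]·V[y|x; i,j] = δ_{i,j}·ξ[x]; (3) Σ_{x∈G} R[y|x; a,b]·η[x] = δ_{a,b}·η[y]; (4) Σ_{x∈G} ξ[x]·η[x] = 1. -/
/-- The tensor `R[y|x; a,b] = δ_{x,y}·ρ(x)_{ab}` built from a matrix representation of a
finite group. -/
noncomputable def Rtensor {G : Type*} [Group G] [DecidableEq G] {d : ℕ}
    (ρ : G →* (Matrix (Fin d) (Fin d) ℂ)ˣ) (y x : G) (a b : Fin d) : ℂ :=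
  if x = y then (ρ x).val a b else 0

/-- The tensor `V[y|x; i,j] = δ_{i,j}·δ_{y, x·g_i}`. -/
def Vtensor {G : Type*} [Group G] [DecidableEq G] {d : ℕ}
    (g : Fin d → G) (y x : G) (i j : Fin d) : ℂ :=
  (if i = j then 1 else 0) * (if y = x * g i then 1 else 0)

/-- The tensor `η[x] = δ_{x,1}`. -/
def etaTensor {G : Type*} [Group G] [DecidableEq G] (x : G) : ℂ :=
  if x = 1 then 1 else 0

/-- The tensor `ξ[x] = 1`. -/
def xiTensor {G : Type*} (_ : G) : ℂ := 1

/-- The gate entries `U^{(i,a)}_{(b,j)} = δ_{i,j}·ρ(g_i)_{ab}`. -/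
noncomputable def Ugroup {G : Type*} [Group G] {d : ℕ}
    (ρ : G →* (Matrix (Fin d) (Fin d) ℂ)ˣ) (g : Fin d → G)
    (i : Fin d) (a b : Fin d) (j : Fin d) : ℂ :=
  (if i = j then 1 else 0) * (ρ (g i)).val a b

/-!
Read an element `x` of the group as the state of a register. `V` multiplies the register by `g i` on
the right and leaves the vertical index `i` alone, `R` applies `ρ x` to the vertical space and
leaves the register alone, and `U` applies `ρ (g i)` controlled by `i`. The first relation compares
applying `ρ` after the translation with applying it before, so it amounts to
`ρ (x * g i) = ρ x * ρ (g i)`; the third amounts to `ρ 1 = 1`.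
-/

section Definitions

variable {M S ι n : Type*} [Monoid M] [Semiring S]

/-- The tensor `R` of a matrix representation `ρ` of a monoid, with the output `y` of the horizontal
wire before its input `x`, as in `Rtensor`. -/
def repTensor [Fintype n] [DecidableEq n] [DecidableEq M] (ρ : M →* Matrix n n S)
    (y x : M) (a b : n) : S :=
  if x = y then ρ x a b else 0

variable (S) in
/-- The tensor `V` of right translation by the family `g`, controlled by the vertical index. The
semiring `S` of entries is explicit because `g` does not determine it. -/
def translationTensor [DecidableEq ι] [DecidableEq M] (g : ι → M) (y x : M) (i j : ι) : S :=
  (if i = j then 1 else 0) * (if y = x * g i then 1 else 0)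

variable (S) in
/-- The initial vector `η` of the horizontal wire, concentrated at the identity of the monoid. -/
def unitTensor [DecidableEq M] (x : M) : S :=
  if x = 1 then 1 else 0

variable (S) in
/-- The final covector `ξ` of the horizontal wire, which sums over all elements of `M`. -/
def counitTensor {M : Type*} (_ : M) : S :=
  1

/-- The gate `U` applying `ρ (g i)` controlled by `i`. Its upper indices are `(i, a)` and its lower
indices `(b, j)`, as in `Ugroup`. -/
def controlledGate [Fintype n] [DecidableEq n] [DecidableEq ι] (ρ : M →* Matrix n n S) (g : ι → M)
    (i : ι) (a b : n) (j : ι) : S :=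
  (if i = j then 1 else 0) * ρ (g i) a b

end Definitions

section Relations

variable {M S ι n : Type*} [Monoid M] [Semiring S] [Fintype n] [DecidableEq n] [DecidableEq ι]
  (ρ : M →* Matrix n n S) (g : ι → M)

theorem sum_apply_mul_controlledGate (x : M) (a b : n) (i j : ι) :
    ∑ c, ρ x a c * controlledGate ρ g i c b j = (if i = j then 1 else 0) * ρ (x * g i) a b := by
  split_ifs with hij
  · simp only [controlledGate, if_pos hij, one_mul, map_mul, Matrix.mul_apply]
  · simp only [controlledGate, if_neg hij, zero_mul, mul_zero, Finset.sum_const_zero]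

variable [DecidableEq M]

theorem repTensor_one_right (y : M) (a b : n) :
    repTensor ρ y 1 a b = (if a = b then 1 else 0) * unitTensor S y := by
  simp only [repTensor, unitTensor, map_one, Matrix.one_apply, eq_comm (a := (1 : M)), mul_ite,
    mul_one, mul_zero]

theorem ite_mul_repTensor_mul_right (y x : M) (a b : n) (i j : ι) :
    (if i = j then 1 else 0) * repTensor ρ y (x * g i) a b =
      translationTensor S g y x i j * ρ (x * g j) a b := by
  rcases eq_or_ne i j with rfl | hij
  · simp only [repTensor, translationTensor, eq_comm (a := y), if_true, one_mul, ite_mul, zero_mul]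
  · simp only [translationTensor, if_neg hij, zero_mul]

variable [Fintype M]

theorem sum_mul_unitTensor (f : M → S) : ∑ x, f x * unitTensor S x = f 1 := by
  simp only [unitTensor, mul_ite, mul_one, mul_zero, Finset.sum_ite_eq', Finset.mem_univ, if_true]

theorem sum_mul_repTensor (f : M → S) (x : M) (a b : n) :
    ∑ z, f z * repTensor ρ z x a b = f x * ρ x a b := by
  simp only [repTensor, mul_ite, mul_zero, Finset.sum_ite_eq, Finset.mem_univ, if_true]

theorem sum_mul_translationTensor (f : M → S) (x : M) (i j : ι) :
    ∑ z, f z * translationTensor S g z x i j = (if i = j then 1 else 0) * f (x * g i) := by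
  simp only [translationTensor, mul_ite, mul_one, mul_zero, Finset.sum_ite_eq', Finset.mem_univ,
    if_true, ite_mul, one_mul, zero_mul]

theorem sum_translationTensor_mul_repTensor_mul_controlledGate [Fintype ι] (x y : M)
    (a b : n) (i j : ι) :
    ∑ z, ∑ k, ∑ c,
        translationTensor S g y z i k * repTensor ρ z x a c * controlledGate ρ g k c b j =
      translationTensor S g y x i j * ρ (x * g j) a b := by
  calc
    _ = ∑ k, ∑ c, (∑ z, translationTensor S g y z i k * repTensor ρ z x a c) *
          controlledGate ρ g k c b j := by
      simp only [Finset.sum_mul]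
      rw [Finset.sum_comm]
      exact Finset.sum_congr rfl fun k _ ↦ Finset.sum_comm
    _ = ∑ k, translationTensor S g y x i k * ∑ c, ρ x a c * controlledGate ρ g k c b j := by
      simp only [sum_mul_repTensor ρ (fun z ↦ translationTensor S g y z i _), mul_assoc,
        Finset.mul_sum]
    _ = ∑ k, translationTensor S g y x i k *
          ((if k = j then 1 else 0) * ρ (x * g k) a b) := by
      simp only [sum_apply_mul_controlledGate]
    _ = translationTensor S g y x i j * ρ (x * g j) a b := by
      simp only [ite_mul, one_mul, zero_mul, mul_ite, mul_zero, Finset.sum_ite_eq',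
        Finset.mem_univ, if_true]

end Relations

theorem finite_group_solvable_tensors_general
    {M S ι n : Type*} [Monoid M] [Fintype M] [DecidableEq M] [Semiring S]
    [Fintype ι] [DecidableEq ι] [Fintype n] [DecidableEq n]
    (ρ : M →* Matrix n n S) (g : ι → M) :
    (∀ (x y : M) (a b : n) (i j : ι),
        ∑ z, repTensor ρ y z a b * translationTensor S g z x i j =
          ∑ z, ∑ k, ∑ c,
            translationTensor S g y z i k * repTensor ρ z x a c * controlledGate ρ g k c b j) ∧
    (∀ (x : M) (i j : ι),
        ∑ y, counitTensor S y * translationTensor S g y x i j =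
          (if i = j then 1 else 0) * counitTensor S x) ∧
    (∀ (y : M) (a b : n),
        ∑ x, repTensor ρ y x a b * unitTensor S x =
          (if a = b then 1 else 0) * unitTensor S y) ∧
    (∑ x : M, counitTensor S x * unitTensor S x = 1) := by
  refine ⟨fun x y a b i j ↦ ?_, fun x i j ↦ ?_, fun y a b ↦ ?_, ?_⟩
  · rw [sum_mul_translationTensor g (fun z ↦ repTensor ρ y z a b), ite_mul_repTensor_mul_right,
      sum_translationTensor_mul_repTensor_mul_controlledGate]
  · exact sum_mul_translationTensor g (counitTensor S) x i j
  · rw [sum_mul_unitTensor fun x ↦ repTensor ρ y x a b, repTensor_one_right]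
  · exact sum_mul_unitTensor (counitTensor S)

/-- **Finite group solvable tensors, Sec. IV.A of the paper.**
For any finite group `G`, matrix representation `ρ : G →* GL_d(ℂ)` and elements
`g₁, …, g_d ∈ G`, the tensors `R`, `V`, `η`, `ξ` and the gate `U` satisfy the four
relations of Eq. (1) of the paper. -/
theorem finite_group_solvable_tensors
    {G : Type*} [Group G] [Fintype G] [DecidableEq G] {d : ℕ}
    (ρ : G →* (Matrix (Fin d) (Fin d) ℂ)ˣ) (g : Fin d → G) :
    (∀ (x y : G) (a b i j : Fin d),
        ∑ z : G, Rtensor ρ y z a b * Vtensor g z x i j =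
          ∑ z : G, ∑ k : Fin d, ∑ c : Fin d,
            Vtensor g y z i k * Rtensor ρ z x a c * Ugroup ρ g k c b j) ∧
    (∀ (x : G) (i j : Fin d),
        ∑ y : G, xiTensor y * Vtensor g y x i j =
          (if i = j then 1 else 0) * xiTensor x) ∧
    (∀ (y : G) (a b : Fin d),
        ∑ x : G, Rtensor ρ y x a b * etaTensor x =
          (if a = b then 1 else 0) * etaTensor y) ∧
    (∑ x : G, xiTensor x * etaTensor x = 1) := by
  exact finite_group_solvable_tensors_general ((Units.coeHom _).comp ρ) g
end

section
/- (Commutation relations Eq. (31) of the paper for the Fibonacci model.) Let ζ be the unique positive real root of z⁴ + z² = 1, let U be the 9×9 unitary on ℂ³ ⊗ ℂ³ determined by U|3,3⟩ = ζ|2,1⟩ − ζ²|3,3⟩, U|2,1⟩ = ζ²|2,1⟩ + ζ|3,3⟩, U|a,b⟩ = |a,b⟩ otherwise, and let P be the orthogonal projection of ℂ³ ⊗ ℂ³ onto the span of {|2,1⟩, |3,3⟩, |1,2⟩, |1,3⟩, |3,2⟩}. Then on ℂ³ ⊗ ℂ³ ⊗ ℂ³ (with 1 the identity on ℂ³ and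 ⊗ the Kronecker product): (P⊗1)(1⊗P) = (1⊗P)(P⊗1), (P⊗1)(1⊗U) = (1⊗U)(P⊗1), and (1⊗P)(U⊗1) = (U⊗1)(1⊗P). -/
open Matrix

/-- The Fibonacci two-qutrit gate of Eq. (29), in the basis `|a,b⟩`, `a, b ∈ {1,2,3}`
(encoded by `Fin 3` with `0 ↔ 1`, `1 ↔ 2`, `2 ↔ 3`). -/
noncomputable def fibGate (ζ : ℝ) : Matrix (Fin 3 × Fin 3) (Fin 3 × Fin 3) ℂ :=
  Matrix.of fun p q =>
    if q = ((1 : Fin 3), (0 : Fin 3)) then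
      (if p = ((1 : Fin 3), (0 : Fin 3)) then ((ζ : ℂ)) ^ 2
       else if p = ((2 : Fin 3), (2 : Fin 3)) then (ζ : ℂ) else 0)
    else if q = ((2 : Fin 3), (2 : Fin 3)) then
      (if p = ((1 : Fin 3), (0 : Fin 3)) then (ζ : ℂ)
       else if p = ((2 : Fin 3), (2 : Fin 3)) then -((ζ : ℂ) ^ 2) else 0)
    else (if p = q then 1 else 0)

/-- The orthogonal projection `P` of `ℂ³ ⊗ ℂ³` onto the span of
`{|2,1⟩, |3,3⟩, |1,2⟩, |1,3⟩, |3,2⟩}` (with states `1,2,3` encoded as `0,1,2 : Fin 3`). -/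
noncomputable def fibProj : Matrix (Fin 3 × Fin 3) (Fin 3 × Fin 3) ℂ :=
  Matrix.of fun p q =>
    if p = q ∧ (p = ((1 : Fin 3), (0 : Fin 3)) ∨ p = ((2 : Fin 3), (2 : Fin 3)) ∨
        p = ((0 : Fin 3), (1 : Fin 3)) ∨ p = ((0 : Fin 3), (2 : Fin 3)) ∨
        p = ((2 : Fin 3), (1 : Fin 3))) then 1 else 0

/-- `M ⊗ 1` acting on the first two factors of `ℂ³ ⊗ ℂ³ ⊗ ℂ³` (Kronecker product with the
identity on the third factor). -/
def op12 (M : Matrix (Fin 3 × Fin 3) (Fin 3 × Fin 3) ℂ) :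
    Matrix (Fin 3 × Fin 3 × Fin 3) (Fin 3 × Fin 3 × Fin 3) ℂ :=
  Matrix.of fun p q => M (p.1, p.2.1) (q.1, q.2.1) * (if p.2.2 = q.2.2 then 1 else 0)

/-- `1 ⊗ M` acting on the last two factors of `ℂ³ ⊗ ℂ³ ⊗ ℂ³` (Kronecker product of the
identity on the first factor with `M`). -/
def op23 (M : Matrix (Fin 3 × Fin 3) (Fin 3 × Fin 3) ℂ) :
    Matrix (Fin 3 × Fin 3 × Fin 3) (Fin 3 × Fin 3 × Fin 3) ℂ :=
  Matrix.of fun p q => (if p.1 = q.1 then 1 else 0) * M (p.2.1, p.2.2) (q.2.1, q.2.2)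

/-!
A diagonal matrix `diagonal d` commutes with `M` as soon as `d` takes equal values at any two
indices linked by a nonzero entry of `M`. The gate `U` links only `|2,1⟩` and `|3,3⟩`. Hence
`1 ⊗ U` changes the middle factor only by exchanging `2` and `3`, and `(a,2) ∈ S ↔ (a,3) ∈ S`
for every `a`; likewise `U ⊗ 1` changes it only by exchanging `1` and `3`, and
`(1,c) ∈ S ↔ (3,c) ∈ S` for every `c`.
The first relation is the same statement for `P` in place of `U`, as a diagonal matrix links no
two distinct states.
-/

open scoped Kronecker

section DiagonalOff

variable {l m n R : Type*}

theorem commute_diagonal_of_apply_ne_zero [Fintype n] [DecidableEq n]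
    [NonUnitalCommSemiring R] {d : n → R} {M : Matrix n n R}
    (h : ∀ i j, M i j ≠ 0 → d i = d j) : Commute (diagonal d) M := by
  ext i j
  rw [diagonal_mul, mul_diagonal, mul_comm]
  by_cases hM : M i j = 0
  · rw [hM, zero_mul, zero_mul]
  · rw [h i j hM]

/-- A matrix is diagonal off `s` if each nonzero off-diagonal entry has both indices in `s`, i.e.
it is block diagonal with one block on `s` and blocks of size one elsewhere. This is the only
property of the gate `U` that its commutation with `P` depends on. -/
def IsDiagonalOff [Zero R] (s : Set n) (M : Matrix n n R) : Prop :=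
  ∀ ⦃i j⦄, i ≠ j → M i j ≠ 0 → i ∈ s ∧ j ∈ s

namespace IsDiagonalOff

theorem of_isDiag [Zero R] {M : Matrix n n R} (hM : M.IsDiag) (s : Set n) :
    IsDiagonalOff s M :=
  fun _ _ hne h => absurd (hM hne) h

theorem apply_eq_apply [Zero R] {s : Set n} {M : Matrix n n R} (hM : IsDiagonalOff s M)
    {α : Type*} {f : n → α} (hf : ∀ i ∈ s, ∀ j ∈ s, f i = f j) {i j : n} (hij : M i j ≠ 0) :
    f i = f j := by
  obtain rfl | hne := eq_or_ne i j
  · rfl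
  · obtain ⟨hi, hj⟩ := hM hne hij
    exact hf i hi j hj

variable [Fintype l] [Fintype m] [Fintype n] [DecidableEq l] [DecidableEq m] [DecidableEq n]
  [CommSemiring R]

theorem commute_diagonal_kronecker_one {s : Set (m × n)} {M : Matrix (m × n) (m × n) R}
    (hM : IsDiagonalOff s M) {d : l × m → R}
    (hd : ∀ a, ∀ p ∈ s, ∀ q ∈ s, d (a, p.1) = d (a, q.1)) :
    Commute (reindex (.prodAssoc l m n) (.prodAssoc l m n)
      (diagonal d ⊗ₖ (1 : Matrix n n R))) ((1 : Matrix l l R) ⊗ₖ M) := by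
  rw [← diagonal_one (n := n), diagonal_kronecker_diagonal, reindex_apply,
    submatrix_diagonal_equiv]
  refine commute_diagonal_of_apply_ne_zero fun ⟨a, p⟩ ⟨a', q⟩ h => ?_
  obtain ⟨ha, hpq⟩ := ne_zero_and_ne_zero_of_mul h
  obtain rfl : a = a' := not_imp_comm.1 one_apply_ne ha
  have hd_eq : d (a, p.1) = d (a, q.1) := hM.apply_eq_apply (f := fun p => d (a, p.1)) (hd a) hpq
  simpa using hd_eq

theorem commute_one_kronecker_diagonal {s : Set (l × m)} {M : Matrix (l × m) (l × m) R}
    (hM : IsDiagonalOff s M) {d : m × n → R}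
    (hd : ∀ c, ∀ p ∈ s, ∀ q ∈ s, d (p.2, c) = d (q.2, c)) :
    Commute ((1 : Matrix l l R) ⊗ₖ diagonal d)
      (reindex (.prodAssoc l m n) (.prodAssoc l m n) (M ⊗ₖ (1 : Matrix n n R))) := by
  rw [← diagonal_one (n := l), diagonal_kronecker_diagonal]
  refine commute_diagonal_of_apply_ne_zero fun ⟨a, b, c⟩ ⟨a', b', c'⟩ h => ?_
  obtain ⟨hpq, hc⟩ := ne_zero_and_ne_zero_of_mul h
  obtain rfl : c = c' := not_imp_comm.1 one_apply_ne hc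
  have hd_eq : d (b, c) = d (b', c) := hM.apply_eq_apply (f := fun p => d (p.2, c)) (hd c) hpq
  simpa using hd_eq

end IsDiagonalOff

end DiagonalOff

theorem op12_eq_reindex_kronecker_one (M : Matrix (Fin 3 × Fin 3) (Fin 3 × Fin 3) ℂ) :
    op12 M = reindex (.prodAssoc _ _ _) (.prodAssoc _ _ _)
      (M ⊗ₖ (1 : Matrix (Fin 3) (Fin 3) ℂ)) :=
  rfl

theorem op23_eq_one_kronecker (M : Matrix (Fin 3 × Fin 3) (Fin 3 × Fin 3) ℂ) :
    op23 M = (1 : Matrix (Fin 3) (Fin 3) ℂ) ⊗ₖ M :=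
  rfl

/-- The set `S` of basis states spanning the range of `P`, with the states `1, 2, 3` encoded as
`0, 1, 2` as in `fibProj`. -/
def fibProjSupport : Finset (Fin 3 × Fin 3) :=
  {(1, 0), (2, 2), (0, 1), (0, 2), (2, 1)}

/-- The basis states `|2,1⟩` and `|3,3⟩` mixed by the gate `U`, encoded as in `fibGate`. -/
def fibGateSupport : Finset (Fin 3 × Fin 3) :=
  {(1, 0), (2, 2)}

theorem fibProj_eq_diagonal :
    fibProj = diagonal fun p => if p ∈ fibProjSupport then 1 else 0 := by
  ext p q
  simp only [fibProj, fibProjSupport, of_apply, diagonal_apply, Finset.mem_insert,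
    Finset.mem_singleton, ite_and]

theorem fibProj_isDiag : fibProj.IsDiag :=
  fibProj_eq_diagonal ▸ isDiag_diagonal _

theorem fibGate_isDiagonalOff (ζ : ℝ) : IsDiagonalOff fibGateSupport (fibGate ζ) := by
  intro p q hne hpq
  simp only [fibGate, of_apply] at hpq
  split_ifs at hpq <;> simp_all [fibGateSupport]

theorem mk_fst_mem_fibProjSupport_iff : ∀ a, ∀ p ∈ fibGateSupport, ∀ q ∈ fibGateSupport,
    (a, p.1) ∈ fibProjSupport ↔ (a, q.1) ∈ fibProjSupport := by
  decide

theorem snd_mk_mem_fibProjSupport_iff : ∀ c, ∀ p ∈ fibGateSupport, ∀ q ∈ fibGateSupport,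
    (p.2, c) ∈ fibProjSupport ↔ (q.2, c) ∈ fibProjSupport := by
  decide

theorem fib_commutation_relations_general {M : Matrix (Fin 3 × Fin 3) (Fin 3 × Fin 3) ℂ}
    (hM : IsDiagonalOff fibGateSupport M) :
    Commute (op12 fibProj) (op23 M) ∧ Commute (op23 fibProj) (op12 M) := by
  simp only [op12_eq_reindex_kronecker_one, op23_eq_one_kronecker, fibProj_eq_diagonal]
  constructor
  · refine hM.commute_diagonal_kronecker_one fun a p hp q hq => ?_
    simp only [mk_fst_mem_fibProjSupport_iff a p hp q hq]
  · refine hM.commute_one_kronecker_diagonal fun c p hp q hq => ?_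
    simp only [snd_mk_mem_fibProjSupport_iff c p hp q hq]

/-- **Commutation relations Eq. (31) for the Fibonacci model.**
With `U` the Fibonacci gate and `P` the projection onto
`span{|2,1⟩, |3,3⟩, |1,2⟩, |1,3⟩, |3,2⟩}`, on `ℂ³ ⊗ ℂ³ ⊗ ℂ³` we have
`(P⊗1)(1⊗P) = (1⊗P)(P⊗1)`, `(P⊗1)(1⊗U) = (1⊗U)(P⊗1)` and
`(1⊗P)(U⊗1) = (U⊗1)(1⊗P)`. -/
theorem fib_commutation_relations (ζ : ℝ) (hpos : 0 < ζ) (hroot : ζ ^ 4 + ζ ^ 2 = 1) :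
    op12 fibProj * op23 fibProj = op23 fibProj * op12 fibProj ∧
    op12 fibProj * op23 (fibGate ζ) = op23 (fibGate ζ) * op12 fibProj ∧
    op23 fibProj * op12 (fibGate ζ) = op12 (fibGate ζ) * op23 fibProj :=
  ⟨(fib_commutation_relations_general (.of_isDiag fibProj_isDiag _)).1,
    fib_commutation_relations_general (fibGate_isDiagonalOff ζ)⟩
end

section
/- (Dimension of the solvable subspace of the Fibonacci model.) Let S = {(2,1),(3,3),(1,2),(1,3),(3,2)} ⊂ {1,2,3}². For every N ≥ 1, the number of functions w : {1,…,N} → {1,2,3} such that (w(i), w(i+1)) ∈ S for all 1 ≤ i ≤ N−1 equals F_{N+3}, where F denotes the Fibonacci sequence. (Equivalently, the dimension of the common +1 eigenspace of the projectors P acting on all neighboring pairs of an N-site open qutrit chain is D_N = F_{N+3}.) -/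
/-!
A word is determined by its first letter `a` and its tail, which is an arbitrary word starting
with a letter allowed after `a`. Here `1` and `3` may be followed by `2` or `3`, and `2` only by
`1`. So if `x n`, `y n`, `z n` count the words with `n + 1` letters starting with `1`, `2`, `3`,
then `x (n + 1) = z (n + 1) = y n + z n` and `y (n + 1) = x n`, which is the Fibonacci recursion.
-/

section Chains

variable {α : Type*} {S : SetRel α α} {n : ℕ} {a : α} {A B : Set α}

/-- The words with first letter in `A` all of whose adjacent pairs lie in `S`, that is, the walks
of `n` steps from `A` in the digraph `S`. The index `n` counts steps, so the words have `n + 1`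
letters. -/
def chainsFrom (S : SetRel α α) (n : ℕ) (A : Set α) : Set (Fin (n + 1) → α) :=
  {w | w 0 ∈ A ∧ ∀ i : Fin n, (w i.castSucc, w i.succ) ∈ S}

lemma cons_mem_chainsFrom {v : Fin (n + 1) → α} :
    (Fin.cons a v : Fin (n + 2) → α) ∈ chainsFrom S (n + 1) A ↔
      a ∈ A ∧ v ∈ chainsFrom S n {b | (a, b) ∈ S} := by
  simp [chainsFrom, Fin.forall_fin_succ (n := n)]

lemma apply_mem_of_mem_chainsFrom (hS : ∀ a b, (a, b) ∈ S → b ∈ A) {w : Fin (n + 1) → α}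
    (hw : w ∈ chainsFrom S n A) (i : Fin (n + 1)) : w i ∈ A :=
  Fin.cases hw.1 (fun j => hS _ _ (hw.2 j)) i

lemma chainsFrom_union : chainsFrom S n (A ∪ B) = chainsFrom S n A ∪ chainsFrom S n B :=
  Set.ext fun _ => or_and_right

lemma disjoint_chainsFrom (h : Disjoint A B) :
    Disjoint (chainsFrom S n A) (chainsFrom S n B) :=
  Set.disjoint_left.2 fun _ hA hB => Set.disjoint_left.1 h hA.1 hB.1

lemma chainsFrom_succ_singleton :
    chainsFrom S (n + 1) {a} = Fin.cons a '' chainsFrom S n {b | (a, b) ∈ S} := by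
  ext w
  induction w using Fin.consCases with
  | cons b v =>
    rw [cons_mem_chainsFrom]
    constructor
    · rintro ⟨rfl, hv⟩
      exact ⟨v, hv, rfl⟩
    · rintro ⟨u, hu, huv⟩
      obtain ⟨rfl, rfl⟩ := Fin.cons_inj.1 huv
      exact ⟨rfl, hu⟩

lemma encard_chainsFrom_zero_singleton : (chainsFrom S 0 {a}).encard = 1 := by
  rw [Set.encard_eq_one]
  refine ⟨fun _ => a, Set.ext fun w => ?_⟩
  simp [chainsFrom, funext_iff]

lemma encard_chainsFrom_succ_singleton :
    (chainsFrom S (n + 1) {a}).encard = (chainsFrom S n {b | (a, b) ∈ S}).encard := by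
  rw [chainsFrom_succ_singleton]
  exact (Fin.cons_right_injective (α := fun _ => α) a).encard_image _

lemma encard_chainsFrom_insert (ha : a ∉ A) :
    (chainsFrom S n (insert a A)).encard =
      (chainsFrom S n {a}).encard + (chainsFrom S n A).encard := by
  rw [Set.insert_eq, chainsFrom_union,
    Set.encard_union_eq (disjoint_chainsFrom (Set.disjoint_singleton_left.2 ha))]

end Chains

/-- The set `S` of admissible adjacent pairs of the Fibonacci model. -/
def fibonacciRel : SetRel ℕ ℕ :=
  {(2, 1), (3, 3), (1, 2), (1, 3), (3, 2)}

lemma setOf_fibonacciRel_one : {b | (1, b) ∈ fibonacciRel} = {2, 3} := by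
  simp [fibonacciRel, Set.ext_iff]

lemma setOf_fibonacciRel_two : {b | (2, b) ∈ fibonacciRel} = {1} := by
  simp [fibonacciRel]

lemma setOf_fibonacciRel_three : {b | (3, b) ∈ fibonacciRel} = {2, 3} := by
  simp [fibonacciRel, Set.ext_iff, or_comm]

lemma snd_mem_of_mem_fibonacciRel (a b : ℕ) (h : (a, b) ∈ fibonacciRel) :
    b ∈ ({1, 2, 3} : Set ℕ) := by
  simp only [fibonacciRel, Set.mem_insert_iff, Set.mem_singleton_iff, Prod.mk.injEq] at h ⊢
  omega

lemma encard_chainsFrom_fibonacciRel_singleton (n : ℕ) :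
    (chainsFrom fibonacciRel n {1}).encard = Nat.fib (n + 2) ∧
    (chainsFrom fibonacciRel n {2}).encard = Nat.fib (n + 1) ∧
    (chainsFrom fibonacciRel n {3}).encard = Nat.fib (n + 2) := by
  induction n with
  | zero => simp [encard_chainsFrom_zero_singleton]
  | succ n ih =>
    obtain ⟨h₁, h₂, h₃⟩ := ih
    have h₂₃ : (chainsFrom fibonacciRel n {2, 3}).encard = Nat.fib (n + 3) := by
      rw [encard_chainsFrom_insert (by simp), h₂, h₃, ← Nat.cast_add, ← Nat.fib_add_two]
    simp only [encard_chainsFrom_succ_singleton, setOf_fibonacciRel_one, setOf_fibonacciRel_two,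
      setOf_fibonacciRel_three]
    exact ⟨h₂₃, h₁, h₂₃⟩

lemma encard_chainsFrom_fibonacciRel (n : ℕ) :
    (chainsFrom fibonacciRel n {1, 2, 3}).encard = Nat.fib (n + 4) := by
  obtain ⟨h₁, -, -⟩ := encard_chainsFrom_fibonacciRel_singleton n
  have h₂₃ : (chainsFrom fibonacciRel n {2, 3}).encard = Nat.fib (n + 3) := by
    rw [← setOf_fibonacciRel_one, ← encard_chainsFrom_succ_singleton]
    exact (encard_chainsFrom_fibonacciRel_singleton (n + 1)).1
  rw [encard_chainsFrom_insert (by simp), h₁, h₂₃, ← Nat.cast_add, ← Nat.fib_add_two]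

lemma mem_chainsFrom_fibonacciRel_iff {n : ℕ} {w : Fin (n + 1) → ℕ} :
    w ∈ chainsFrom fibonacciRel n {1, 2, 3} ↔
      (∀ i, 1 ≤ w i ∧ w i ≤ 3) ∧
      ∀ (i : Fin (n + 1)) (h : (i : ℕ) + 1 < n + 1),
        (w i, w ⟨(i : ℕ) + 1, h⟩) ∈ fibonacciRel := by
  have mem_letters (k : ℕ) : k ∈ ({1, 2, 3} : Set ℕ) ↔ 1 ≤ k ∧ k ≤ 3 := by
    simp only [Set.mem_insert_iff, Set.mem_singleton_iff]
    omega
  constructor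
  · intro hw
    have hletters := apply_mem_of_mem_chainsFrom snd_mem_of_mem_fibonacciRel hw
    exact ⟨fun i => (mem_letters _).1 (hletters i), fun i h => hw.2 ⟨i, by omega⟩⟩
  · rintro ⟨hletters, hpairs⟩
    exact ⟨(mem_letters _).2 (hletters 0), fun i => hpairs i.castSucc (by simp)⟩

/-- **Dimension of the solvable subspace of the Fibonacci model.**
Let `S = {(2,1),(3,3),(1,2),(1,3),(3,2)} ⊂ {1,2,3}²`.  For every `N ≥ 1`, the number of
strings `w : {1,…,N} → {1,2,3}` all of whose adjacent pairs lie in `S` equals `F_{N+3}`,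
the `(N+3)`-rd Fibonacci number. -/
theorem fib_solvable_subspace_dimension (N : ℕ) (hN : 1 ≤ N) :
    Nat.card {w : Fin N → ℕ //
      (∀ i, 1 ≤ w i ∧ w i ≤ 3) ∧
      (∀ (i : Fin N) (h : (i : ℕ) + 1 < N),
        (w i, w ⟨(i : ℕ) + 1, h⟩) ∈
          ({(2, 1), (3, 3), (1, 2), (1, 3), (3, 2)} : Set (ℕ × ℕ)))} =
    Nat.fib (N + 3) := by
  obtain ⟨n, rfl⟩ := Nat.exists_eq_add_of_le' hN
  calc
    _ = Nat.card (chainsFrom fibonacciRel n {1, 2, 3}) :=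
      Nat.card_congr (Equiv.subtypeEquivRight fun _ => mem_chainsFrom_fibonacciRel_iff.symm)
    _ = Nat.fib (n + 1 + 3) := by
      rw [Nat.card_coe_set_eq, Set.ncard, encard_chainsFrom_fibonacciRel, ENat.toNat_natCast]
end

section
/- (Qutrit–IRF correspondence, Sec. V.B.2 of the paper.) Call a list w of length N over the alphabet {1,2,3} tileable if it is a concatenation of blocks (2,1) and (3). For N ≥ 1, the map that assigns to a tileable list w of length N the string s of length N−1 over {I,τ} defined by s_j = I if (w_j, w_{j+1}) = (2,1) and s_j = τ otherwise, is a bijection from the set of tileable lists of length N onto the set of strings of length N−1 over {I,τ} containing no two consecutive I's. Consequently, the number of tileable lists of length N equals F_{N+1}. -/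
/-- A list over the alphabet `{1,2,3}` (as natural numbers) is *tileable* if it is a
concatenation of blocks `(2,1)` and `(3)`. -/
inductive Tileable : List ℕ → Prop
  | nil : Tileable []
  | three {w : List ℕ} : Tileable w → Tileable (3 :: w)
  | block {w : List ℕ} : Tileable w → Tileable (2 :: 1 :: w)

/-- The map assigning to a list `w` of length `N` the string of length `N−1` over
`{I, τ}` (encoded as `Bool`, with `true = I`) whose `j`-th letter is `I` exactly when
`(w_j, w_{j+1}) = (2,1)`. -/
def toIRF (w : List ℕ) : List Bool :=
  (w.zip w.tail).map fun p => decide (p = (2, 1))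

/-
A tileable list of positive length is read off from its string of links by scanning from the left:
a link `I` forces a block `(2,1)`, whose link to the next block is `τ`, and a link `τ` forces a
block `(3)`. This scan inverts `toIRF`. Counting tileable lists by their first block gives the
Fibonacci recurrence.
-/

/-- The Rydberg constraint on a string over `{I, τ}`, with `true = I`. It is an abbreviation so that
the library's lemmas on `List.IsChain` apply directly. -/
abbrev Rydberg (s : List Bool) : Prop :=
  s.IsChain fun a b => ¬(a = true ∧ b = true)

/-- The inverse of `toIRF`, reading a string of links as a list of blocks. The letter after an `I`
is skipped without being read: the Rydberg constraint forces it to be `τ`. -/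
def ofIRF : List Bool → List ℕ
  | [] => [3]
  | [true] => [2, 1]
  | false :: s => 3 :: ofIRF s
  | true :: _ :: s => 2 :: 1 :: ofIRF s

theorem toIRF_cons_cons (a b : ℕ) (w : List ℕ) :
    toIRF (a :: b :: w) = decide ((a, b) = (2, 1)) :: toIRF (b :: w) := rfl

theorem length_toIRF (w : List ℕ) : (toIRF w).length = w.length - 1 := by
  simp [toIRF]

theorem toIRF_cons_of_ne_two {a : ℕ} {w : List ℕ} (ha : a ≠ 2) (hw : w ≠ []) :
    toIRF (a :: w) = false :: toIRF w := by
  obtain ⟨b, v, rfl⟩ := List.exists_cons_of_ne_nil hw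
  simp [toIRF_cons_cons, ha]

theorem toIRF_two_one_cons {w : List ℕ} (hw : w ≠ []) :
    toIRF (2 :: 1 :: w) = true :: false :: toIRF w := by
  rw [toIRF_cons_cons, toIRF_cons_of_ne_two (by decide) hw, decide_eq_true rfl]

-- Two consecutive links share a letter, which cannot be both `1` and `2`.
theorem rydberg_toIRF : ∀ w : List ℕ, Rydberg (toIRF w)
  | [] | [_] => .nil
  | [_, _] => .singleton _
  | a :: b :: c :: w => by
    have shared_letter : ¬((a = 2 ∧ b = 1) ∧ b = 2 ∧ c = 1) := by omega
    refine List.isChain_cons_cons.mpr ⟨?_, rydberg_toIRF (b :: c :: w)⟩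
    simpa only [decide_eq_true_eq, Prod.mk.injEq] using shared_letter

theorem tileable_ofIRF (s : List Bool) : Tileable (ofIRF s) := by
  fun_induction ofIRF s with
  | case1 => exact .three .nil
  | case2 => exact .block .nil
  | case3 _ ih => exact .three ih
  | case4 _ _ ih => exact .block ih

theorem length_ofIRF (s : List Bool) : (ofIRF s).length = s.length + 1 := by
  fun_induction ofIRF s <;> simp_all

theorem ofIRF_ne_nil (s : List Bool) : ofIRF s ≠ [] :=
  List.ne_nil_of_length_eq_add_one (length_ofIRF s)

theorem toIRF_ofIRF {s : List Bool} (hs : Rydberg s) : toIRF (ofIRF s) = s := by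
  fun_induction ofIRF s with
  | case1 => rfl
  | case2 => rfl
  | case3 s ih => rw [toIRF_cons_of_ne_two (by decide) (ofIRF_ne_nil s), ih hs.tail]
  | case4 b s ih =>
    have hb : b = false := by simpa using hs.rel
    rw [toIRF_two_one_cons (ofIRF_ne_nil s), ih hs.tail.tail, hb]

theorem ofIRF_toIRF {w : List ℕ} (hw : Tileable w) (hne : w ≠ []) : ofIRF (toIRF w) = w := by
  induction hw with
  | nil => contradiction
  | @three w _ ih =>
    obtain rfl | hw := eq_or_ne w []
    · rfl
    · rw [toIRF_cons_of_ne_two (by decide) hw, ofIRF, ih hw]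
  | @block w _ ih =>
    obtain rfl | hw := eq_or_ne w []
    · rfl
    · rw [toIRF_two_one_cons hw, ofIRF, ih hw]

/-- The finite set of tileable lists of length `n`, generated by the choice of the first block. -/
def tilings : ℕ → Finset (List ℕ)
  | 0 => {[]}
  | 1 => {[3]}
  | n + 2 => (tilings (n + 1)).image (3 :: ·) ∪ (tilings n).image (2 :: 1 :: ·)

theorem mem_tilings {n : ℕ} {w : List ℕ} : w ∈ tilings n ↔ Tileable w ∧ w.length = n := by
  constructor
  · intro hw
    fun_induction tilings n generalizing w with
    | case1 => exact Finset.mem_singleton.mp hw ▸ ⟨.nil, rfl⟩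
    | case2 => exact Finset.mem_singleton.mp hw ▸ ⟨.three .nil, rfl⟩
    | case3 n ih_three ih_block =>
      simp only [Finset.mem_union, Finset.mem_image] at hw
      obtain ⟨v, hv, rfl⟩ | ⟨v, hv, rfl⟩ := hw
      · exact ⟨.three (ih_three hv).1, congrArg (· + 1) (ih_three hv).2⟩
      · exact ⟨.block (ih_block hv).1, congrArg (· + 2) (ih_block hv).2⟩
  · rintro ⟨hw, rfl⟩
    induction hw with
    | nil => exact Finset.mem_singleton_self _
    | @three w _ ih =>
      cases w with
      | nil => exact Finset.mem_singleton_self _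
      | cons => exact Finset.mem_union_left _ (Finset.mem_image_of_mem _ ih)
    | block _ ih => exact Finset.mem_union_right _ (Finset.mem_image_of_mem _ ih)

theorem card_tilings (n : ℕ) : (tilings n).card = Nat.fib (n + 1) := by
  fun_induction tilings n with
  | case1 => rfl
  | case2 => rfl
  | case3 n ih_three ih_block =>
    have first_block_differs :
        Disjoint ((tilings (n + 1)).image (3 :: ·)) ((tilings n).image (2 :: 1 :: ·)) := by
      simp [Finset.disjoint_left]
    have two_one_cons_injective : Function.Injective (2 :: 1 :: · : List ℕ → List ℕ) :=
      List.cons_injective.comp List.cons_injective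
    rw [Finset.card_union_of_disjoint first_block_differs,
      Finset.card_image_of_injective _ List.cons_injective,
      Finset.card_image_of_injective _ two_one_cons_injective,
      ih_three, ih_block, Nat.fib_add_two (n := n + 1), add_comm]

theorem card_tileable (n : ℕ) :
    Nat.card {w : List ℕ // Tileable w ∧ w.length = n} = Nat.fib (n + 1) :=
  (Nat.subtype_card (tilings n) fun _ => mem_tilings).trans (card_tilings n)

/-- **Qutrit–IRF correspondence, Sec. V.B.2 of the paper.**
For `N ≥ 1`, the map `toIRF` is a bijection from the set of tileable lists of length `N`
onto the set of strings of length `N−1` over `{I, τ}` with no two consecutive `I`'s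
(the Rydberg constraint); consequently the number of tileable lists of length `N` is
`F_{N+1}`. -/
theorem tileable_irf_bijection (N : ℕ) (hN : 1 ≤ N) :
    Set.BijOn toIRF {w : List ℕ | Tileable w ∧ w.length = N}
      {s : List Bool | s.length = N - 1 ∧
        List.Chain' (fun a b => ¬(a = true ∧ b = true)) s} ∧
    Nat.card {w : List ℕ // Tileable w ∧ w.length = N} = Nat.fib (N + 1) := by
  refine ⟨Set.InvOn.bijOn (f' := ofIRF) ⟨?left_inv, ?right_inv⟩ ?mapsTo_toIRF ?mapsTo_ofIRF,
    card_tileable N⟩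
  case left_inv =>
    rintro w ⟨hw, hlen⟩
    exact ofIRF_toIRF hw (List.ne_nil_of_length_pos (hlen ▸ hN))
  case right_inv =>
    rintro s ⟨_, hs⟩
    exact toIRF_ofIRF hs
  case mapsTo_toIRF =>
    rintro w ⟨_, hlen⟩
    exact ⟨by rw [length_toIRF, hlen], rydberg_toIRF w⟩
  case mapsTo_ofIRF =>
    rintro s ⟨hlen, _⟩
    exact ⟨tileable_ofIRF s, by rw [length_ofIRF, hlen, Nat.sub_add_cancel hN]⟩
end
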